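/- arXiv:math/0505041 — 2 statements merged into one kernel-verified Lean document; each statement's English description precedes it below -/
import Mathlib

section
/- (Askey–Wilson relations in the Racah case.) Let d be a non-negative integer and let u, u*, v be scalars in K; for an integer n, n also denotes the element n·1 of K. Define, for 0 ≤ i ≤ d, θ_i = (i + u)(i + u + 1) and θ*_i = (i + u*)(i + u* + 1), and, for 1 ≤ i ≤ d, φ_i = i·(i − d − 1)·(i + u + u* − v)·(i + u + u* + d + 1 + v). Let (A, A*) be the associated split pair of (d+1)×(d+1) matrices. Then (A, A*) satisfies the Askey–Wilson relations AW(2, 2, 2, 0, 0, ω, η, η*), where ω = −2u² − 2(u*)² − 2v² − 2(d + 1)(u + u* + v) − 2d² − 4d, η = 2u·(u + d + 1)·(v − u*)·(v + u* + d + 1), and η* = 2u*·(u* + d + 1)·(v − u)·(v + u + d + 1). -/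
/-- A pair of square matrices satisfies the Askey–Wilson relations
`AW(β, γ, γs, ρ, ρs, ω, η, ηs)`. -/
def MatSatisfiesAW {K : Type*} [Field K] {n : ℕ}
    (A As : Matrix (Fin n) (Fin n) K) (β γ γs ρ ρs ω η ηs : K) : Prop :=
  A ^ 2 * As - β • (A * As * A) + As * A ^ 2 - γ • (A * As + As * A) - ρ • As =
      γs • (A ^ 2) + ω • A + η • (1 : Matrix (Fin n) (Fin n) K) ∧
  As ^ 2 * A - β • (As * A * As) + A * As ^ 2 - γs • (As * A + A * As) - ρs • A =
      γ • (As ^ 2) + ω • As + ηs • (1 : Matrix (Fin n) (Fin n) K)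

/-- The split pair of `(d+1) × (d+1)` matrices associated with data `θ, θs, φ`:
`A` is lower bidiagonal with diagonal `θ_0, …, θ_d` and subdiagonal entries `1`;
`As` is upper bidiagonal with diagonal `θs_0, …, θs_d` and superdiagonal entries
`φ_1, …, φ_d`. -/
def splitPair {K : Type*} [Field K] {d : ℕ} (θ θs φ : ℕ → K) :
    Matrix (Fin (d + 1)) (Fin (d + 1)) K × Matrix (Fin (d + 1)) (Fin (d + 1)) K :=
  (Matrix.of fun i j => if (i : ℕ) = j then θ i else if (j : ℕ) + 1 = i then 1 else 0,
   Matrix.of fun i j => if (i : ℕ) = j then θs i else if (i : ℕ) + 1 = j then φ j else 0)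

/-!
Extend the Racah data polynomially to all integer indices. The resulting doubly infinite split pair
acts on two-sided sequences, and an Askey–Wilson relation for it splits into one scalar identity for
each band of the matrices, here a polynomial identity in the index. Since `φ` vanishes at `0` and
`d + 1`, restricting sequences to the indices `0, …, d` intertwines the doubly infinite pair with
the finite one, which inherits the relation. Each of the two relations is invariant under
transposition, and transposing the pair while exchanging its members amounts to exchanging `u` and
`u*`, so the second relation is an instance of the first.
-/

open Matrix

section AskeyWilson

variable {R : Type*} [CommRing R]

/-- The first of the two Askey–Wilson relations, for a pair of square matrices; the second one is
`AWRelation B A β γs γ ρs ω ηs`. -/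
def AWRelation {n : Type*} [Fintype n] [DecidableEq n] (A B : Matrix n n R)
    (β γ γs ρ ω η : R) : Prop :=
  A ^ 2 * B - β • (A * B * A) + B * A ^ 2 - γ • (A * B + B * A) - ρ • B =
    γs • A ^ 2 + ω • A + η • (1 : Matrix n n R)

theorem AWRelation.transpose {n : Type*} [Fintype n] [DecidableEq n] {A B : Matrix n n R}
    {β γ γs ρ ω η : R} (h : AWRelation A B β γ γs ρ ω η) :
    AWRelation Aᵀ Bᵀ β γ γs ρ ω η := by
  have hT := congrArg Matrix.transpose h
  simp only [transpose_add, transpose_sub, transpose_smul, transpose_mul, transpose_pow,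
    transpose_one, ← mul_assoc] at hT
  rw [AWRelation, ← hT, add_comm (Aᵀ * Bᵀ)]
  abel

/-- The scalar identities expressing the first Askey–Wilson relation for the doubly infinite split
pair with diagonals `θ`, `θs` and products `φ` of opposite off-diagonal entries, one field for each
band of the matrices. Off the main diagonal, the product of off-diagonal entries common to all terms
is cancelled. -/
structure IsAWArray (θ θs φ : ℤ → R) (β γ γs ρ ω η : R) : Prop where
  superdiagonal (i : ℤ) : θ i ^ 2 - β * θ i * θ (i + 1) + θ (i + 1) ^ 2
    - γ * (θ i + θ (i + 1)) - ρ = 0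
  diagonal (i : ℤ) : 2 * θ i ^ 2 * θs i + φ i * (θ (i - 1) + θ i) + φ (i + 1) * (θ i + θ (i + 1))
    - β * (θ i ^ 2 * θs i + θ i * (φ i + φ (i + 1))) - γ * (2 * θ i * θs i + φ i + φ (i + 1))
    - ρ * θs i = γs * θ i ^ 2 + ω * θ i + η
  subdiagonal (i : ℤ) : (θ (i - 1) + θ i) * (θs (i - 1) + θs i) + φ (i - 1) + φ (i + 1)
    - β * (θ (i - 1) * θs (i - 1) + θ i * θs i + φ i) - γ * (θs (i - 1) + θs i) =
    γs * (θ (i - 1) + θ i) + ω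
  secondSubdiagonal (i : ℤ) : θs (i - 1) - β * θs i + θs (i + 1) = γs

/-- The doubly infinite lower bidiagonal matrix with diagonal `θ` and subdiagonal `a`, as an
operator on two-sided sequences; `a i` stands in row `i`. -/
def lowerAct (θ a f : ℤ → R) (i : ℤ) : R :=
  θ i * f i + a i * f (i - 1)

/-- The doubly infinite upper bidiagonal matrix with diagonal `θ` and superdiagonal `b`, as an
operator on two-sided sequences; `b i` stands in column `i`, which makes this the transpose of
`lowerAct θ b`. -/
def upperAct (θ b f : ℤ → R) (i : ℤ) : R :=
  θ i * f i + b (i + 1) * f (i + 1)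

theorem IsAWArray.lowerAct_upperAct_relation {θ θs a b : ℤ → R} {β γ γs ρ ω η : R}
    (h : IsAWArray θ θs (a * b) β γ γs ρ ω η) (f : ℤ → R) :
    lowerAct θ a (lowerAct θ a (upperAct θs b f))
        - β • lowerAct θ a (upperAct θs b (lowerAct θ a f))
        + upperAct θs b (lowerAct θ a (lowerAct θ a f))
        - γ • (lowerAct θ a (upperAct θs b f) + upperAct θs b (lowerAct θ a f))
        - ρ • upperAct θs b f =
      γs • lowerAct θ a (lowerAct θ a f) + ω • lowerAct θ a f + η • f := by
  ext i
  have hsup := h.superdiagonal i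
  have hdiag := h.diagonal i
  have hsub := h.subdiagonal i
  have hsub₂ := h.secondSubdiagonal (i - 1)
  simp only [Pi.mul_apply, sub_add_cancel] at hdiag hsub hsub₂
  simp only [lowerAct, upperAct, Pi.add_apply, Pi.sub_apply, Pi.smul_apply, smul_eq_mul,
    add_sub_cancel_right, sub_add_cancel]
  linear_combination b (i + 1) * f (i + 1) * hsup + f i * hdiag + a i * f (i - 1) * hsub
    + a i * a (i - 1) * f (i - 1 - 1) * hsub₂

/-- The `n × n` lower bidiagonal matrix with diagonal `θ 0, …, θ (n - 1)` and subdiagonal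
`a 1, …, a (n - 1)`. -/
def lowerBidiagonal (n : ℕ) (θ a : ℤ → R) : Matrix (Fin n) (Fin n) R :=
  Matrix.of fun i j => if (i : ℕ) = j then θ i else if (j : ℕ) + 1 = i then a i else 0

/-- The terms of a two-sided sequence with indices `0, …, n - 1`. -/
def truncate (n : ℕ) (f : ℤ → R) (i : Fin n) : R :=
  f i

theorem truncate_surjective (n : ℕ) : Function.Surjective (truncate (R := R) n) := fun x =>
  ⟨Function.extend (fun i : Fin n => (i : ℤ)) x 0, funext fun i =>
    (Nat.cast_injective.comp Fin.val_injective).extend_apply x 0 i⟩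

theorem lowerBidiagonal_mulVec_truncate {n : ℕ} (θ : ℤ → R) {a : ℤ → R} (ha : a 0 = 0)
    (f : ℤ → R) :
    lowerBidiagonal n θ a *ᵥ truncate n f = truncate n (lowerAct θ a f) := by
  ext i
  have hentry (j : Fin n) : lowerBidiagonal n θ a i j * f j =
      (if i = j then θ i * f i else 0) + if (j : ℕ) + 1 = i then a i * f (i - 1) else 0 := by
    simp only [lowerBidiagonal, of_apply, ← Fin.ext_iff]
    grind
  simp only [mulVec, dotProduct, truncate, lowerAct, hentry, Finset.sum_add_distrib,
    Finset.sum_ite_eq, Finset.mem_univ, if_true]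
  congr 1
  obtain hi | ⟨k, hk⟩ : (i : ℕ) = 0 ∨ ∃ k : Fin n, (k : ℕ) + 1 = i := by
    obtain ⟨_ | k, hk⟩ := i
    · exact .inl rfl
    · exact .inr ⟨⟨k, by lia⟩, rfl⟩
  · simp [hi, ha]
  · simp [← hk, ← Fin.ext_iff]

theorem lowerBidiagonal_transpose_mulVec_truncate {n : ℕ} (θ : ℤ → R) {b : ℤ → R} (hb : b n = 0)
    (f : ℤ → R) :
    (lowerBidiagonal n θ b)ᵀ *ᵥ truncate n f = truncate n (upperAct θ b f) := by
  ext i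
  have hentry (j : Fin n) : lowerBidiagonal n θ b j i * f j =
      (if i = j then θ i * f i else 0) + if (i : ℕ) + 1 = j then b (i + 1) * f (i + 1) else 0 := by
    simp only [lowerBidiagonal, of_apply, ← Fin.ext_iff]
    grind
  simp only [mulVec, dotProduct, transpose_apply, truncate, upperAct, hentry,
    Finset.sum_add_distrib, Finset.sum_ite_eq, Finset.mem_univ, if_true]
  congr 1
  obtain hi | ⟨k, hk⟩ : (i : ℕ) + 1 = n ∨ ∃ k : Fin n, (i : ℕ) + 1 = k := by
    obtain hi | hi := eq_or_ne ((i : ℕ) + 1) n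
    · exact .inl hi
    · exact .inr ⟨⟨i + 1, by lia⟩, rfl⟩
  · have hb' : b (i + 1) = 0 := by simpa [← hi] using hb
    simp [hb']
  · simp [hk, ← Fin.ext_iff]

theorem IsAWArray.awRelation_lowerBidiagonal {θ θs a b : ℤ → R} {β γ γs ρ ω η : R}
    (h : IsAWArray θ θs (a * b) β γ γs ρ ω η) {n : ℕ} (ha : a 0 = 0) (hb : b n = 0) :
    AWRelation (lowerBidiagonal n θ a) (lowerBidiagonal n θs b)ᵀ β γ γs ρ ω η := by
  refine Matrix.ext_of_mulVec_single fun k => ?_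
  obtain ⟨f, hf⟩ := truncate_surjective n (Pi.single k (1 : R))
  simp only [← hf, add_mulVec, sub_mulVec, smul_mulVec, pow_two, ← mulVec_mulVec, one_mulVec,
    lowerBidiagonal_mulVec_truncate _ ha, lowerBidiagonal_transpose_mulVec_truncate _ hb]
  exact congrArg (truncate n) (h.lowerAct_upperAct_relation f)

end AskeyWilson

theorem update_one_zero_mul_eq_self {ι M : Type*} [DecidableEq ι] [MulZeroOneClass M] {φ : ι → M}
    {k : ι} (hk : φ k = 0) : Function.update (1 : ι → M) k 0 * φ = φ := by
  ext i
  obtain rfl | hi := eq_or_ne i k <;> simp [*]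

section SplitPair

variable {K : Type*} [Field K]

theorem splitPair_fst_eq_lowerBidiagonal {d : ℕ} {θ θs φ : ℕ → K} {θ' a : ℤ → K}
    (hθ : ∀ i : ℕ, i ≤ d → θ i = θ' i) (ha : ∀ i : ℕ, 1 ≤ i → i ≤ d → a i = 1) :
    (splitPair (d := d) θ θs φ).1 = lowerBidiagonal (d + 1) θ' a := by
  ext i j
  simp only [splitPair, lowerBidiagonal, of_apply]
  grind

theorem splitPair_snd_eq_lowerBidiagonal_transpose {d : ℕ} {θ θs φ : ℕ → K} {θs' b : ℤ → K}
    (hθs : ∀ i : ℕ, i ≤ d → θs i = θs' i) (hφ : ∀ i : ℕ, 1 ≤ i → i ≤ d → φ i = b i) :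
    (splitPair (d := d) θ θs φ).2 = (lowerBidiagonal (d + 1) θs' b)ᵀ := by
  ext i j
  simp only [splitPair, lowerBidiagonal, of_apply, transpose_apply]
  grind

theorem IsAWArray.matSatisfiesAW_splitPair {θ' θs' φ' : ℤ → K} {β γ γs ρ ρs ω η ηs : K}
    (h : IsAWArray θ' θs' φ' β γ γs ρ ω η) (hs : IsAWArray θs' θ' φ' β γs γ ρs ω ηs) {d : ℕ}
    (hφ₀ : φ' 0 = 0) (hφ₁ : φ' (d + 1 : ℕ) = 0) {θ θs φ : ℕ → K}
    (hθ : ∀ i : ℕ, i ≤ d → θ i = θ' i) (hθs : ∀ i : ℕ, i ≤ d → θs i = θs' i)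
    (hφ : ∀ i : ℕ, 1 ≤ i → i ≤ d → φ i = φ' i) :
    MatSatisfiesAW (splitPair (d := d) θ θs φ).1 (splitPair (d := d) θ θs φ).2
      β γ γs ρ ρs ω η ηs := by
  -- The subdiagonal weight at `k = 0` or `k = d + 1` is not an entry of the matrix, so it is free.
  have hA (k : ℤ) (hk : ∀ i : ℕ, 1 ≤ i → i ≤ d → (i : ℤ) ≠ k) :
      (splitPair (d := d) θ θs φ).1 =
        lowerBidiagonal (d + 1) θ' (Function.update (1 : ℤ → K) k 0) :=
    splitPair_fst_eq_lowerBidiagonal hθ fun i h₁ h₂ => Function.update_of_ne (hk i h₁ h₂) ..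
  have hAs := splitPair_snd_eq_lowerBidiagonal_transpose (θ := θ) hθs hφ
  constructor
  · rw [← update_one_zero_mul_eq_self hφ₀] at h
    rw [hA 0 (by lia), hAs]
    exact h.awRelation_lowerBidiagonal (Function.update_self ..) hφ₁
  · rw [← update_one_zero_mul_eq_self hφ₁, mul_comm] at hs
    rw [hA (d + 1 : ℕ) (by lia), hAs]
    exact (hs.awRelation_lowerBidiagonal hφ₀ (Function.update_self ..)).transpose

end SplitPair

section Racah

variable {R : Type*} [CommRing R]

/-- The Racah eigenvalue sequence `θ`, extended to all integer indices. -/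
def racahEigenvalue (u : R) (i : ℤ) : R :=
  (i + u) * (i + u + 1)

/-- The Racah split sequence `φ`, extended to all integer indices. The parameter `d` is an arbitrary
ring element. -/
def racahSplit (d u us v : R) (i : ℤ) : R :=
  i * (i - d - 1) * (i + u + us - v) * (i + u + us + d + 1 + v)

/-- The coefficient `ω` of the Askey–Wilson relations in the Racah case. -/
def racahOmega (d u us v : R) : R :=
  -2 * u ^ 2 - 2 * us ^ 2 - 2 * v ^ 2 - 2 * (d + 1) * (u + us + v) - 2 * d ^ 2 - 4 * d

/-- The coefficient `η` of the Askey–Wilson relations in the Racah case; `η*` is obtained by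
exchanging `u` and `us`. -/
def racahEta (d u us v : R) : R :=
  2 * u * (u + d + 1) * (v - us) * (v + us + d + 1)

theorem racahSplit_comm (d u us v : R) : racahSplit d u us v = racahSplit d us u v := by
  ext i
  simp only [racahSplit, add_right_comm _ u us]

theorem racahOmega_comm (d u us v : R) : racahOmega d u us v = racahOmega d us u v := by
  simp only [racahOmega]
  ring

theorem isAWArray_racah (d u us v : R) :
    IsAWArray (racahEigenvalue u) (racahEigenvalue us) (racahSplit d u us v) 2 2 2 0
      (racahOmega d u us v) (racahEta d u us v) := by
  constructor <;> intro i <;>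
    simp only [racahEigenvalue, racahSplit, racahOmega, racahEta] <;> push_cast <;> ring

end Racah

theorem racah_askey_wilson_general
    {K : Type*} [Field K]
    (d : ℕ) (u us v : K)
    (θ θs φ : ℕ → K)
    (hθ : ∀ i : ℕ, i ≤ d → θ i = ((i : K) + u) * ((i : K) + u + 1))
    (hθs : ∀ i : ℕ, i ≤ d → θs i = ((i : K) + us) * ((i : K) + us + 1))
    (hφ : ∀ i : ℕ, 1 ≤ i → i ≤ d →
      φ i = (i : K) * ((i : K) - (d : K) - 1) * ((i : K) + u + us - v) *
        ((i : K) + u + us + (d : K) + 1 + v)) :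
    MatSatisfiesAW (splitPair (d := d) θ θs φ).1 (splitPair (d := d) θ θs φ).2
      2 2 2 0 0
      (-2 * u ^ 2 - 2 * us ^ 2 - 2 * v ^ 2 - 2 * ((d : K) + 1) * (u + us + v)
        - 2 * (d : K) ^ 2 - 4 * (d : K))
      (2 * u * (u + (d : K) + 1) * (v - us) * (v + us + (d : K) + 1))
      (2 * us * (us + (d : K) + 1) * (v - u) * (v + u + (d : K) + 1)) := by
  have h := isAWArray_racah (d : K) u us v
  have hs := isAWArray_racah (d : K) us u v
  rw [← racahSplit_comm, ← racahOmega_comm] at hs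
  refine h.matSatisfiesAW_splitPair hs ?_ ?_ ?_ ?_ ?_
  · simp [racahSplit]
  · simp [racahSplit]
  · simpa [racahEigenvalue] using hθ
  · simpa [racahEigenvalue] using hθs
  · simpa [racahSplit] using hφ

/-- Askey–Wilson relations for the normalized Racah split pair. -/
theorem racah_askey_wilson
    {K : Type*} [Field K] [IsAlgClosed K] (hchar : ringChar K ≠ 2)
    (d : ℕ) (u us v : K)
    (θ θs φ : ℕ → K)
    (hθ : ∀ i : ℕ, i ≤ d → θ i = ((i : K) + u) * ((i : K) + u + 1))
    (hθs : ∀ i : ℕ, i ≤ d → θs i = ((i : K) + us) * ((i : K) + us + 1))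
    (hφ : ∀ i : ℕ, 1 ≤ i → i ≤ d →
      φ i = (i : K) * ((i : K) - (d : K) - 1) * ((i : K) + u + us - v) *
        ((i : K) + u + us + (d : K) + 1 + v)) :
    MatSatisfiesAW (splitPair (d := d) θ θs φ).1 (splitPair (d := d) θ θs φ).2
      2 2 2 0 0
      (-2 * u ^ 2 - 2 * us ^ 2 - 2 * v ^ 2 - 2 * ((d : K) + 1) * (u + us + v)
        - 2 * (d : K) ^ 2 - 4 * (d : K))
      (2 * u * (u + (d : K) + 1) * (v - us) * (v + us + (d : K) + 1))
      (2 * us * (us + (d : K) + 1) * (v - u) * (v + u + (d : K) + 1)) :=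
  racah_askey_wilson_general d u us v θ θs φ hθ hθs hφ
end

section
/- (Askey–Wilson relations in the Krawtchouk case.) Let d be a non-negative integer and let v be a scalar in K; for an integer n, n also denotes the element n·1 of K, and d/2 denotes d·(2·1)^{−1} in K. Define, for 0 ≤ i ≤ d, θ_i = i − d/2 and θ*_i = i − d/2, and, for 1 ≤ i ≤ d, φ_i = v·i·(i − d − 1). Let (A, A*) be the associated split pair of (d+1)×(d+1) matrices. Assume θ_i ≠ θ_j for 0 ≤ i < j ≤ d and φ_i ≠ 0 and (v − 1)·i·(i − d − 1) ≠ 0 for 1 ≤ i ≤ d. Then (A, A*) satisfies the Askey–Wilson relations AW(2, 0, 0, 1, 1, 2v − 1, 0, 0). -/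
/-!
Write `A = D + L` and `As = D + U` with `D` diagonal, `L` the lower shift and `U` a weighted upper
shift. The Krawtchouk data are exactly such that `⁅D, L⁆ = L`, `⁅D, U⁆ = -U` and
`⁅L, U⁆ = -(2 * v) • D`, so that `D`, `L`, `U` span a Lie algebra of `𝔰𝔩₂` type. For `β = 2` and
`γ = γs = 0` the Askey–Wilson relations only involve the double commutators `⁅A, ⁅A, As⁆⁆` and
`⁅As, ⁅As, A⁆⁆`, which are computed inside this Lie algebra.
-/

section LieAlgebra

variable {R 𝔤 : Type*} [CommRing R] [LieRing 𝔤] [LieAlgebra R 𝔤] {c : R} {h e f : 𝔤}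

/-- An `𝔰𝔩₂`-triple with rescaled brackets: `h` is half of the usual semisimple element, so that
`e` and `f` have weights `1` and `-1`, and `⁅e, f⁆` is `-c` times `h` for an arbitrary scalar `c`
(an `IsSl2Triple` `h', e, f` with `h' = 2 • h` is the case `c = -2`). -/
structure IsScaledSl2Triple (c : R) (h e f : 𝔤) : Prop where
  lie_h_e : ⁅h, e⁆ = e
  lie_h_f : ⁅h, f⁆ = -f
  lie_e_f : ⁅e, f⁆ = -(c • h)

namespace IsScaledSl2Triple

theorem neg_swap (t : IsScaledSl2Triple c h e f) : IsScaledSl2Triple c (-h) (-f) (-e) where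
  lie_h_e := by rw [lie_neg, neg_lie, neg_neg, t.lie_h_f]
  lie_h_f := by rw [lie_neg, neg_lie, neg_neg, neg_neg, t.lie_h_e]
  lie_e_f := by rw [lie_neg, neg_lie, neg_neg, ← lie_skew, t.lie_e_f, smul_neg]

theorem lie_add_add (t : IsScaledSl2Triple c h e f) : ⁅h + e, h + f⁆ = -(e + f + c • h) := by
  rw [add_lie, lie_add, lie_add, lie_self, t.lie_h_f, t.lie_e_f, ← lie_skew e h, t.lie_h_e]
  abel

theorem lie_lie_add_add (t : IsScaledSl2Triple c h e f) :
    ⁅h + e, ⁅h + e, h + f⁆⁆ = (h + f) + (c - 1) • (h + e) := by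
  have lie_e_h : ⁅e, h⁆ = -e := by rw [← lie_skew, t.lie_h_e]
  rw [t.lie_add_add]
  simp only [lie_neg, lie_add, lie_smul, add_lie, lie_self, t.lie_h_e, t.lie_h_f, t.lie_e_f,
    lie_e_h]
  module

theorem lie_lie_add_add_swap (t : IsScaledSl2Triple c h e f) :
    ⁅h + f, ⁅h + f, h + e⁆⁆ = (h + e) + (c - 1) • (h + f) := by
  have key := t.neg_swap.lie_lie_add_add
  simp only [← neg_add, neg_lie, lie_neg, neg_neg, smul_neg] at key
  exact neg_injective key

end IsScaledSl2Triple

end LieAlgebra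

attribute [local instance] LieRing.ofAssociativeRing

theorem lie_lie_self_eq {R : Type*} [Ring R] (a b : R) :
    ⁅a, ⁅a, b⁆⁆ = a ^ 2 * b - 2 • (a * b * a) + b * a ^ 2 := by
  simp only [Ring.lie_def]
  noncomm_ring

theorem matSatisfiesAW_two_zero_zero_iff {K : Type*} [Field K] {n : ℕ}
    {A As : Matrix (Fin n) (Fin n) K} {ρ ρs ω η ηs : K} :
    MatSatisfiesAW A As 2 0 0 ρ ρs ω η ηs ↔
      ⁅A, ⁅A, As⁆⁆ = ρ • As + ω • A + η • 1 ∧ ⁅As, ⁅As, A⁆⁆ = ρs • A + ω • As + ηs • 1 := by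
  simp only [MatSatisfiesAW, lie_lie_self_eq, zero_smul, sub_zero, zero_add, sub_eq_iff_eq_add',
    ofNat_smul_eq_nsmul, add_assoc]

section Subdiagonal

variable {R : Type*} [CommRing R] {d : ℕ}

/-- The matrix with entry `a i` in position `(i, i - 1)` for `1 ≤ i ≤ d` and zeros elsewhere. The
weights are indexed by the row, so the value `a 0` is irrelevant. -/
def subdiagonal (d : ℕ) (a : ℕ → R) : Matrix (Fin (d + 1)) (Fin (d + 1)) R :=
  Matrix.of fun i j => if (j : ℕ) + 1 = i then a i else 0

theorem subdiagonal_congr {a b : ℕ → R} (hab : ∀ i, 1 ≤ i → i ≤ d → a i = b i) :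
    subdiagonal d a = subdiagonal d b := by
  ext i j
  exact ite_congr rfl (fun _ => hab i (by omega) (by omega)) fun _ => rfl

theorem lie_diagonal_subdiagonal {θ : ℕ → R} {c : R} (hθ : ∀ i < d, θ (i + 1) - θ i = c)
    (a : ℕ → R) :
    ⁅Matrix.diagonal fun i : Fin (d + 1) => θ i, subdiagonal d a⁆ = c • subdiagonal d a := by
  ext i j
  simp only [Ring.lie_def, subdiagonal, Matrix.sub_apply, Matrix.smul_apply, Matrix.diagonal_mul,
    Matrix.mul_diagonal, Matrix.of_apply, smul_eq_mul]
  split_ifs with hij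
  · rw [← hij, ← hθ j (by omega)]
    ring
  · ring

theorem lie_diagonal_subdiagonal_transpose {θ : ℕ → R} {c : R} (hθ : ∀ i < d, θ (i + 1) - θ i = c)
    (a : ℕ → R) :
    ⁅Matrix.diagonal fun i : Fin (d + 1) => θ i, (subdiagonal d a).transpose⁆ =
      -(c • (subdiagonal d a).transpose) := by
  rw [← lie_skew, ← Matrix.transpose_smul, ← lie_diagonal_subdiagonal hθ, Matrix.lie_transpose,
    Matrix.diagonal_transpose]

theorem subdiagonal_mul_transpose {a b : ℕ → R} (h₀ : a 0 * b 0 = 0) :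
    subdiagonal d a * (subdiagonal d b).transpose =
      Matrix.diagonal fun i : Fin (d + 1) => a i * b i := by
  ext i j
  simp only [Matrix.mul_apply, subdiagonal, Matrix.transpose_apply, Matrix.of_apply,
    Matrix.diagonal_apply, Fin.ext_iff, Fin.sum_univ_castSucc, ite_mul, zero_mul]
  cases i using Fin.cases with
  | zero => simp [h₀]
  | succ i =>
    suffices (if (i : ℕ) + 1 = j then a (i + 1) * b j else 0) =
        if (i : ℕ) + 1 = j then a (i + 1) * b (i + 1) else 0 by
      simpa [← Fin.ext_iff, i.is_lt.ne', eq_comm] using this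
    exact ite_congr rfl (fun hij => by rw [hij]) fun _ => rfl

theorem subdiagonal_transpose_mul {a b : ℕ → R} (h_last : a (d + 1) * b (d + 1) = 0) :
    (subdiagonal d b).transpose * subdiagonal d a =
      Matrix.diagonal fun i : Fin (d + 1) => a (i + 1) * b (i + 1) := by
  ext i j
  simp only [Matrix.mul_apply, subdiagonal, Matrix.transpose_apply, Matrix.of_apply,
    Matrix.diagonal_apply, Fin.ext_iff, Fin.sum_univ_succ, ite_mul, zero_mul]
  cases i using Fin.lastCases with
  | last => simp [h_last, fun x : Fin d => x.is_lt.ne']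
  | cast i => simp [← Fin.ext_iff, mul_comm, eq_comm]

theorem lie_subdiagonal_transpose {a b : ℕ → R} (h₀ : a 0 * b 0 = 0)
    (h_last : a (d + 1) * b (d + 1) = 0) :
    ⁅subdiagonal d a, (subdiagonal d b).transpose⁆ =
      Matrix.diagonal fun i : Fin (d + 1) => a i * b i - a (i + 1) * b (i + 1) := by
  rw [Ring.lie_def, subdiagonal_mul_transpose h₀, subdiagonal_transpose_mul h_last,
    Matrix.diagonal_sub]

theorem isScaledSl2Triple_krawtchouk (v : R) {m : R} (hm : 2 * m = d) :
    IsScaledSl2Triple (2 * v) (Matrix.diagonal fun i : Fin (d + 1) => ((i : ℕ) : R) - m)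
      (subdiagonal d 1) (subdiagonal d fun i => v * i * (i - d - 1)).transpose := by
  have hstep (i : ℕ) (_ : i < d) : ((i + 1 : ℕ) : R) - m - (i - m) = 1 := by push_cast; ring
  constructor
  · rw [lie_diagonal_subdiagonal (θ := fun i => (i : R) - m) hstep, one_smul]
  · rw [lie_diagonal_subdiagonal_transpose (θ := fun i => (i : R) - m) hstep, one_smul]
  · rw [lie_subdiagonal_transpose (by simp) (by simp), ← Matrix.diagonal_smul, Matrix.diagonal_neg]
    congr 1
    funext i
    simp only [Pi.one_apply, Pi.smul_apply, smul_eq_mul]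
    push_cast
    linear_combination -v * hm

end Subdiagonal

section SplitPair

variable {K : Type*} [Field K] {d : ℕ} (θ θs φ : ℕ → K)

theorem splitPair_fst :
    (splitPair (d := d) θ θs φ).1 =
      Matrix.diagonal (fun i : Fin (d + 1) => θ i) + subdiagonal d 1 := by
  ext i j
  simp only [splitPair, subdiagonal, Matrix.of_apply, Matrix.add_apply, Matrix.diagonal_apply,
    Fin.ext_iff, Pi.one_apply]
  grind

theorem splitPair_snd :
    (splitPair (d := d) θ θs φ).2 =
      Matrix.diagonal (fun i : Fin (d + 1) => θs i) + (subdiagonal d φ).transpose := by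
  ext i j
  simp only [splitPair, subdiagonal, Matrix.of_apply, Matrix.add_apply, Matrix.diagonal_apply,
    Matrix.transpose_apply, Fin.ext_iff]
  grind

end SplitPair

theorem krawtchouk_askey_wilson_general {K : Type*} [Field K] (hchar : ringChar K ≠ 2)
    (d : ℕ) (v : K) (θ θs φ : ℕ → K)
    (hθ : ∀ i : ℕ, i ≤ d → θ i = (i : K) - (d : K) / 2)
    (hθs : ∀ i : ℕ, i ≤ d → θs i = (i : K) - (d : K) / 2)
    (hφ : ∀ i : ℕ, 1 ≤ i → i ≤ d → φ i = v * (i : K) * ((i : K) - (d : K) - 1)) :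
    MatSatisfiesAW (splitPair (d := d) θ θs φ).1 (splitPair (d := d) θ θs φ).2
      2 0 0 1 1 (2 * v - 1) 0 0 := by
  have triple := isScaledSl2Triple_krawtchouk v
    (mul_div_cancel₀ (d : K) (Ring.two_ne_zero hchar))
  rw [matSatisfiesAW_two_zero_zero_iff, splitPair_fst, splitPair_snd, subdiagonal_congr hφ,
    funext fun i : Fin (d + 1) => hθ i i.is_le, funext fun i : Fin (d + 1) => hθs i i.is_le]
  simp only [one_smul, zero_smul, add_zero]
  exact ⟨triple.lie_lie_add_add, triple.lie_lie_add_add_swap⟩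

/-- Askey–Wilson relations for the normalized Krawtchouk split pair. -/
theorem krawtchouk_askey_wilson
    {K : Type*} [Field K] [IsAlgClosed K] (hchar : ringChar K ≠ 2)
    (d : ℕ) (v : K)
    (θ θs φ : ℕ → K)
    (hθ : ∀ i : ℕ, i ≤ d → θ i = (i : K) - (d : K) / 2)
    (hθs : ∀ i : ℕ, i ≤ d → θs i = (i : K) - (d : K) / 2)
    (hφ : ∀ i : ℕ, 1 ≤ i → i ≤ d → φ i = v * (i : K) * ((i : K) - (d : K) - 1))
    (hθne : ∀ i j : ℕ, i < j → j ≤ d → θ i ≠ θ j)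
    (hne : ∀ i : ℕ, 1 ≤ i → i ≤ d →
      φ i ≠ 0 ∧ (v - 1) * (i : K) * ((i : K) - (d : K) - 1) ≠ 0) :
    MatSatisfiesAW (splitPair (d := d) θ θs φ).1 (splitPair (d := d) θ θs φ).2
      2 0 0 1 1 (2 * v - 1) 0 0 :=
  krawtchouk_askey_wilson_general hchar d v θ θs φ hθ hθs hφ
end
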